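/- Let (D_a)_{a∈Σ} be distributions on (Σ')^{n'} that are uniformly α-similar, and let E₁,...,E_k be distributions on Σ^n that are uniformly β-similar for some β ∈ [0,1]. Then the substitution products E₁ ⊛ D, ..., E_k ⊛ D are uniformly αβ-similar. -/

import Mathlib

open scoped Classical

/-- mass that the distribution `D` on strings `J → σ` gives, after projecting onto the
coordinates in `Q`, to the pattern that `f` induces on `Q`. -/
noncomputable def projMass {J σ : Type*} [Fintype J] [Fintype σ]
    (D : (J → σ) → ℝ) (Q : Finset J) (f : J → σ) : ℝ :=
  ∑ x ∈ Finset.univ.filter (fun x : J → σ => ∀ i ∈ Q, x i = f i), D x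

/-- A family of distributions on strings `J → σ` is uniformly `μ`-similar if for every set `Q`
of queried coordinates the projections onto `Q` are `μ·|Q|`-similar, i.e. for every pattern the
minimum projected mass is at least `(1 - μ·|Q|)` times the maximum projected mass. -/
def UniformlySimilar {ι J σ : Type*} [Fintype J] [Fintype σ]
    (D : ι → (J → σ) → ℝ) (μ : ℝ) : Prop :=
  ∀ (Q : Finset J) (f : J → σ) (i j : ι),
    (1 - μ * Q.card) * projMass (D i) Q f ≤ projMass (D j) Q f

theorem aux_pointwise {τ : Type*} (T : Finset τ) (v c k : τ → ℝ)
    (hv : ∀ t, 0 ≤ v t) (hc : ∀ t, 0 ≤ c t) (hk : ∀ t, v t ≤ k t * (v t + c t)) :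
    ∑ S ∈ T.powerset, (S.card : ℝ) * ((∏ t ∈ S, v t) * ∏ t ∈ T \ S, c t)
      ≤ (∑ t ∈ T, k t) * ∏ t ∈ T, (v t + c t) := by
  induction T using Finset.induction_on with
  | empty => simp
  | insert a T ha ih =>
    have hP : ∏ t ∈ T, (v t + c t)
        = ∑ S ∈ T.powerset, (∏ t ∈ S, v t) * ∏ t ∈ T \ S, c t := Finset.prod_add _ _ _
    have hPnn : 0 ≤ ∏ t ∈ T, (v t + c t) :=
      Finset.prod_nonneg fun t _ => add_nonneg (hv t) (hc t)
    rw [Finset.sum_powerset_insert ha, Finset.sum_insert ha, Finset.prod_insert ha]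
    have h1 : ∑ S ∈ T.powerset, (S.card : ℝ) *
          ((∏ t ∈ S, v t) * ∏ t ∈ (insert a T) \ S, c t)
        = c a * ∑ S ∈ T.powerset, (S.card : ℝ) * ((∏ t ∈ S, v t) * ∏ t ∈ T \ S, c t) := by
      rw [Finset.mul_sum]
      refine Finset.sum_congr rfl fun S hS => ?_
      have haS : a ∉ S := fun h => ha (Finset.mem_powerset.1 hS h)
      rw [Finset.insert_sdiff_of_notMem _ haS, Finset.prod_insert (by simp [ha])]
      ring
    have h2 : ∑ S ∈ T.powerset, ((insert a S).card : ℝ) *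
          ((∏ t ∈ insert a S, v t) * ∏ t ∈ (insert a T) \ (insert a S), c t)
        = v a * (∑ S ∈ T.powerset, (S.card : ℝ) * ((∏ t ∈ S, v t) * ∏ t ∈ T \ S, c t)
            + ∏ t ∈ T, (v t + c t)) := by
      rw [hP, ← Finset.sum_add_distrib, Finset.mul_sum]
      refine Finset.sum_congr rfl fun S hS => ?_
      have haS : a ∉ S := fun h => ha (Finset.mem_powerset.1 hS h)
      have e : (insert a T) \ (insert a S) = T \ S := by
        ext t
        simp only [Finset.mem_sdiff, Finset.mem_insert]
        constructor
        · rintro ⟨h | h, h'⟩ <;> tauto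
        · rintro ⟨h, h'⟩
          refine ⟨Or.inr h, ?_⟩
          rintro (rfl | h'')
          · exact ha h
          · exact h' h''
      rw [e, Finset.prod_insert haS, Finset.card_insert_of_notMem haS]
      push_cast
      ring
    rw [h1, h2]
    have h3 := mul_le_mul_of_nonneg_left ih (add_nonneg (hv a) (hc a))
    have h4 := mul_le_mul_of_nonneg_right (hk a) hPnn
    nlinarith [h3, h4]

theorem aux_weighted {ι J σ : Type*} [Fintype J] [Fintype σ]
    (E : ι → (J → σ) → ℝ) (β : ℝ) (hE : UniformlySimilar E β) (S : Finset J)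
    (g : (J → σ) → ℝ) (hg : ∀ x, 0 ≤ g x)
    (hgS : ∀ x y, (∀ t ∈ S, x t = y t) → g x = g y) (i j : ι) :
    (1 - β * S.card) * ∑ x, E i x * g x ≤ ∑ x, E j x * g x := by
  have key : ∀ i, ∑ x, E i x * g x = ∑ p : S → σ,
      ∑ x ∈ Finset.univ.filter (fun x : J → σ => (fun t : S => x t) = p), E i x * g x :=
    fun i => (Finset.sum_fiberwise _ _ _).symm
  rw [key i, key j, Finset.mul_sum]
  refine Finset.sum_le_sum fun p _ => ?_
  by_cases h : ∃ x0 : J → σ, (fun t : S => x0 t) = p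
  · obtain ⟨x0, rfl⟩ := h
    have e : ∀ i, ∑ x ∈ Finset.univ.filter
        (fun x : J → σ => (fun t : S => x t) = (fun t : S => x0 t)), E i x * g x
        = projMass (E i) S x0 * g x0 := by
      intro i
      unfold projMass
      rw [Finset.sum_mul]
      refine Finset.sum_congr ?_ ?_
      · ext x
        simp [funext_iff]
      · intro x hx
        rw [hgS x x0 (by simpa using hx)]
    rw [e i, e j, ← mul_assoc]
    exact mul_le_mul_of_nonneg_right (hE S x0 i j) (hg x0)
  · have e : Finset.univ.filter (fun x : J → σ => (fun t : S => x t) = p) = ∅ := by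
      ext x
      simp only [Finset.mem_filter, Finset.mem_univ, true_and, Finset.notMem_empty, iff_false]
      exact fun hx => h ⟨x, hx⟩
    simp [e]

theorem aux_proj {σ σ' : Type*} [Fintype σ] [Fintype σ'] {n n' : ℕ}
    (D : σ → (Fin n' → σ') → ℝ) (E : (Fin n → σ) → ℝ)
    (Q : Finset (Fin n × Fin n')) (f : Fin n × Fin n' → σ') :
    projMass (fun z : Fin n × Fin n' → σ' =>
        ∑ x : Fin n → σ, E x * ∏ t : Fin n, D (x t) (fun j => z (t, j))) Q f
      = ∑ x : Fin n → σ, E x * ∏ t : Fin n,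
          projMass (D (x t)) (Finset.univ.filter fun j => (t, j) ∈ Q) (fun j => f (t, j)) := by
  unfold projMass
  rw [Finset.sum_comm]
  refine Finset.sum_congr rfl fun x _ => ?_
  rw [← Finset.mul_sum, Finset.prod_univ_sum]
  congr 1
  refine Finset.sum_bij' (fun z _ => fun t j => z (t, j)) (fun w _ => fun p => w p.1 p.2)
    ?_ ?_ ?_ ?_ ?_
  · intro z hz
    simp only [Finset.mem_filter, Finset.mem_univ, true_and, Fintype.mem_piFinset] at hz ⊢
    exact fun t j h => hz _ h
  · intro w hw
    simp only [Finset.mem_filter, Finset.mem_univ, true_and, Fintype.mem_piFinset] at hw ⊢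
    exact fun p h => hw p.1 p.2 h
  · intro z _
    rfl
  · intro w _
    rfl
  · intro z _
    rfl

theorem aux_card {n n' : ℕ} (Q : Finset (Fin n × Fin n')) :
    ∑ t : Fin n, ((Finset.univ.filter fun j => (t, j) ∈ Q).card : ℝ) = Q.card := by
  have h : Q = Finset.univ.filter fun p => p ∈ Q := by simp
  conv_rhs => rw [h]
  simp only [Finset.card_filter, Fintype.sum_prod_type]
  push_cast
  rfl

theorem stmt9 {σ σ' : Type*} [Fintype σ] [Fintype σ'] {ι : Type*} {n n' : ℕ}
    (α β : ℝ) (hα : 0 ≤ α) (hβ0 : 0 ≤ β) (hβ1 : β ≤ 1)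
    (D : σ → (Fin n' → σ') → ℝ)
    (hDnn : ∀ a z, 0 ≤ D a z) (hDsum : ∀ a, ∑ z, D a z = 1)
    (hDsim : UniformlySimilar D α)
    (E : ι → (Fin n → σ) → ℝ)
    (hEnn : ∀ i x, 0 ≤ E i x) (hEsum : ∀ i, ∑ x, E i x = 1)
    (hEsim : UniformlySimilar E β) :
    UniformlySimilar
      (fun i => fun z : Fin n × Fin n' → σ' =>
        ∑ x : Fin n → σ, E i x * ∏ t : Fin n, D (x t) (fun j => z (t, j)))
      (α * β) := by
  intro Q f i j
  simp only [aux_proj]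
  set d : Fin n → σ → ℝ := fun t a =>
    projMass (D a) (Finset.univ.filter fun j => (t, j) ∈ Q) (fun j => f (t, j)) with hd
  change (1 - α * β * Q.card) * ∑ x : Fin n → σ, E i x * ∏ t, d t (x t)
    ≤ ∑ x : Fin n → σ, E j x * ∏ t, d t (x t)
  set k : Fin n → ℝ := fun t => α * ((Finset.univ.filter fun j => (t, j) ∈ Q).card : ℝ) with hk
  have hksum : ∑ t, k t = α * Q.card := by
    rw [hk, ← Finset.mul_sum, aux_card]
  have hc : ∀ t, ∃ c : ℝ, 0 ≤ c ∧ ∀ a, c ≤ d t a ∧ d t a - c ≤ k t * d t a := by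
    intro t
    rcases isEmpty_or_nonempty σ with hσ | hσ
    · exact ⟨0, le_rfl, fun a => (hσ.false a).elim⟩
    · obtain ⟨a0, ha0⟩ := Finite.exists_min (d t)
      refine ⟨d t a0, Finset.sum_nonneg fun z _ => hDnn a0 z, fun a => ⟨ha0 a, ?_⟩⟩
      have := hDsim (Finset.univ.filter fun j => (t, j) ∈ Q) (fun j => f (t, j)) a a0
      change (1 - k t) * d t a ≤ d t a0 at this
      linarith
  choose c hc0 hcd using hc
  set W : Finset (Fin n) → (Fin n → σ) → ℝ := fun S x =>
    (∏ t ∈ S, (d t (x t) - c t)) * ∏ t ∈ Finset.univ \ S, c t with hW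
  have hprod : ∀ x : Fin n → σ, ∏ t, d t (x t) = ∑ S ∈ Finset.univ.powerset, W S x := by
    intro x
    rw [hW, ← Finset.prod_add]
    simp
  have hpt : ∀ x : Fin n → σ, ∑ S ∈ Finset.univ.powerset, (S.card : ℝ) * W S x
      ≤ (α * Q.card) * ∏ t, d t (x t) := by
    intro x
    have := aux_pointwise Finset.univ (fun t => d t (x t) - c t) c k
      (fun t => sub_nonneg.2 (hcd t (x t)).1) hc0
      (fun t => by simpa using (hcd t (x t)).2)
    rw [hksum] at this
    simp only [sub_add_cancel] at this
    simp only [hW]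
    convert this
  have hexp : ∀ i, ∑ x : Fin n → σ, E i x * ∏ t, d t (x t)
      = ∑ S ∈ Finset.univ.powerset, ∑ x, E i x * W S x := by
    intro i
    rw [Finset.sum_comm]
    refine Finset.sum_congr rfl fun x _ => ?_
    rw [hprod, Finset.mul_sum]
  have hS : ∀ S : Finset (Fin n), (1 - β * S.card) * ∑ x, E i x * W S x ≤ ∑ x, E j x * W S x := by
    intro S
    have hw := aux_weighted E β hEsim S (W S) ?_ ?_ i j
    · convert hw
    · intro x
      exact mul_nonneg (Finset.prod_nonneg fun t _ => sub_nonneg.2 (hcd t (x t)).1)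
        (Finset.prod_nonneg fun t _ => hc0 t)
    · intro x y hxy
      simp only [hW]
      congr 1
      exact Finset.prod_congr rfl fun t ht => by rw [hxy t ht]
  have hsum := Finset.sum_le_sum fun S (_ : S ∈ (Finset.univ : Finset (Fin n)).powerset) => hS S
  rw [← hexp j] at hsum
  refine le_trans ?_ hsum
  have e : ∑ S ∈ (Finset.univ : Finset (Fin n)).powerset,
      (1 - β * S.card) * ∑ x, E i x * W S x
      = ∑ x : Fin n → σ, E i x * ∏ t, d t (x t)
        - β * ∑ x, E i x * ∑ S ∈ Finset.univ.powerset, (S.card : ℝ) * W S x := by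
    rw [hexp i]
    simp only [Finset.mul_sum]
    rw [Finset.sum_comm (s := (Finset.univ : Finset (Fin n → σ))), ← Finset.sum_sub_distrib]
    refine Finset.sum_congr rfl fun S _ => ?_
    rw [← Finset.sum_sub_distrib]
    exact Finset.sum_congr rfl fun x _ => by ring
  have hb : ∑ x, E i x * ∑ S ∈ Finset.univ.powerset, (S.card : ℝ) * W S x
      ≤ (α * Q.card) * ∑ x : Fin n → σ, E i x * ∏ t, d t (x t) := by
    rw [Finset.mul_sum]
    refine Finset.sum_le_sum fun x _ => ?_
    have := mul_le_mul_of_nonneg_left (hpt x) (hEnn i x)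
    linarith
  have := mul_le_mul_of_nonneg_left hb hβ0
  rw [e]
  linarith
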